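/- arXiv:1602.05150 — 8 statements merged into one kernel-verified Lean document; each statement's English description precedes it below -/
import Mathlib

section
/- (Effect of a happy swap chain) Let σ be a configuration on a finite connected simple graph G and let v_1, …, v_m (m ≥ 2, pairwise distinct vertices) form a directed cycle in F(σ), i.e., (v_i, v_{i+1}) is an arc of F(σ) for every i (indices mod m). Then there is a sequence of m − 1 swaps along edges of G transforming σ into the configuration σ′ that agrees with σ outside {v_1, …, v_m} and satisfies σ′(v_{i+1}) = σ(v_i) for all i (indices mod m); moreover L(σ′) = L(σ) − m. -/
theorem chain_aux {V : Type*} [DecidableEq V]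
    (G : SimpleGraph V) (m : ℕ) (v : ℕ → V)
    (hinj : ∀ a < m, ∀ b < m, v a = v b → a = b)
    (hadj : ∀ i, i + 1 < m → G.Adj (v i) (v (i + 1))) (k : ℕ) (hk : k < m) :
    ∃ l : List (V × V), l.length = k ∧ (∀ p ∈ l, G.Adj p.1 p.2) ∧
      (l.map fun p => Equiv.swap p.1 p.2).prod (v 0) = v k ∧
      (∀ i < k, (l.map fun p => Equiv.swap p.1 p.2).prod (v (i + 1)) = v i) ∧
      (∀ w, (∀ i ≤ k, w ≠ v i) → (l.map fun p => Equiv.swap p.1 p.2).prod w = w) := by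
  induction k with
  | zero => exact ⟨[], by simp⟩
  | succ k ih =>
    obtain ⟨l, h1, h2, h3, h4, h5⟩ := ih (by omega)
    refine ⟨(v k, v (k + 1)) :: l, by simp [h1], ?_, ?_, ?_, ?_⟩
    · intro p hp
      rcases List.mem_cons.1 hp with rfl | hp
      · exact hadj k hk
      · exact h2 p hp
    · simp [h3]
    · intro i hi
      simp only [List.map_cons, List.prod_cons, Equiv.Perm.mul_apply]
      rcases Nat.lt_succ_iff_lt_or_eq.1 hi with hi' | rfl
      · rw [h4 i hi']
        apply Equiv.swap_apply_of_ne_of_ne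
        · intro h
          have := hinj i (by omega) k (by omega) h
          omega
        · intro h
          have := hinj i (by omega) (k + 1) (by omega) h
          omega
      · rw [h5 (v (i + 1)), Equiv.swap_apply_right]
        intro j hj h
        have := hinj (i + 1) (by omega) j (by omega) h
        omega
    · intro w hw
      simp only [List.map_cons, List.prod_cons, Equiv.Perm.mul_apply]
      rw [h5 w (fun i hi => hw i (by omega))]
      exact Equiv.swap_apply_of_ne_of_ne (hw k (by omega)) (hw (k + 1) le_rfl)


/-- **Effect of a happy swap chain.** Let `σ` be a configuration on a finite
connected simple graph `G` and let `v 0, …, v (m-1)` (`m ≥ 2`, pairwise distinct) form a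
directed cycle in `F(σ)`, i.e. `(v i, v (i+1 mod m))` is an arc of `F(σ)` for every `i < m`
(an arc `(a, b)` of `F(σ)` means `G.Adj a b` and `dist b (σ a) < dist a (σ a)`).
Then there is a sequence of `m − 1` swaps along edges of `G` transforming `σ` into a
configuration `σ'` that agrees with `σ` outside `{v 0, …, v (m-1)}` and satisfies
`σ' (v (i+1 mod m)) = σ (v i)` for all `i < m`; moreover `L(σ') = L(σ) − m`. -/
theorem token_swapping_happy_swap_chain_effect
    {V : Type*} [Fintype V] [DecidableEq V]
    (G : SimpleGraph V) (hG : G.Connected)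
    (σ : Equiv.Perm V) (m : ℕ) (hm : 2 ≤ m) (v : ℕ → V)
    (hinj : ∀ a < m, ∀ b < m, v a = v b → a = b)
    (harc : ∀ i < m, G.Adj (v i) (v ((i + 1) % m)) ∧
      G.dist (v ((i + 1) % m)) (σ (v i)) < G.dist (v i) (σ (v i))) :
    ∃ (l : List (V × V)) (σ' : Equiv.Perm V),
      l.length = m - 1 ∧
      (∀ p ∈ l, G.Adj p.1 p.2) ∧
      σ' = σ * (l.map fun p => Equiv.swap p.1 p.2).prod ∧
      (∀ w : V, (∀ i < m, w ≠ v i) → σ' w = σ w) ∧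
      (∀ i < m, σ' (v ((i + 1) % m)) = σ (v i)) ∧
      (∑ x, G.dist x (σ' x)) + m = ∑ x, G.dist x (σ x) := by

  obtain ⟨l, h1, h2, h3, h4, h5⟩ := chain_aux G m v hinj (fun i hi => by
    have := (harc i (by omega)).1
    rwa [Nat.mod_eq_of_lt hi] at this) (m - 1) (by omega)
  set ρ := (l.map fun p => Equiv.swap p.1 p.2).prod with hρ
  have hcyc : ∀ i < m, ρ (v ((i + 1) % m)) = v i := by
    intro i hi
    by_cases h : i + 1 < m
    · rw [Nat.mod_eq_of_lt h]
      exact h4 i (by omega)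
    · have h' : i + 1 = m := by omega
      rw [h', Nat.mod_self, h3, ← h', Nat.add_sub_cancel]
  have hout : ∀ w : V, (∀ i < m, w ≠ v i) → ρ w = w :=
    fun w hw => h5 w (fun i hi => hw i (by omega))
  refine ⟨l, σ * ρ, h1, h2, rfl, ?_, ?_, ?_⟩
  · intro w hw
    rw [Equiv.Perm.mul_apply, hout w hw]
  · intro i hi
    rw [Equiv.Perm.mul_apply, hcyc i hi]
  · have hre : ∑ x, G.dist x ((σ * ρ) x) = ∑ y, G.dist (ρ.symm y) (σ y) := by
      rw [← Equiv.sum_comp ρ (fun y => G.dist (ρ.symm y) (σ y))]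
      simp
    have hcard : ((Finset.range m).image v).card = m := by
      rw [Finset.card_image_of_injOn, Finset.card_range]
      intro a ha b hb h
      exact hinj a (by simpa using ha) b (by simpa using hb) h
    have hind : ∑ y, (if y ∈ (Finset.range m).image v then 1 else 0) = m := by
      rw [Finset.sum_ite_mem, Finset.univ_inter, ← Finset.card_eq_sum_ones, hcard]
    rw [hre]
    conv_lhs => rw [← hind]
    rw [← Finset.sum_add_distrib]
    apply Finset.sum_congr rfl
    intro y _
    by_cases hy : y ∈ (Finset.range m).image v
    · rw [if_pos hy]
      obtain ⟨i, hi, rfl⟩ := Finset.mem_image.1 hy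
      have hi := Finset.mem_range.1 hi
      have e : ρ.symm (v i) = v ((i + 1) % m) := by
        rw [Equiv.symm_apply_eq, hcyc i hi]
      rw [e]
      obtain ⟨ha, hd⟩ := harc i hi
      have ht := hG.dist_triangle (u := v i) (v := v ((i + 1) % m)) (w := σ (v i))
      rw [SimpleGraph.dist_eq_one_iff_adj.2 ha] at ht
      omega
    · rw [if_neg hy]
      have e : ρ.symm y = y := by
        rw [Equiv.symm_apply_eq, hout]
        rintro i hi rfl
        exact hy (Finset.mem_image.2 ⟨i, Finset.mem_range.2 hi, rfl⟩)
      rw [e, Nat.add_zero]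
end

section
/- (Lemma 3.2) Let σ be a configuration on a finite connected simple graph G with σ not the identity. Then F(σ) contains a directed cycle with pairwise distinct vertices, or there is an unhappy swap available, i.e., an arc (v, w) of F(σ) with σ w = w. -/
/-- **Lemma 3.2.** Let `σ` be a configuration on a finite connected simple
graph `G` with `σ` not the identity.  Then `F(σ)` contains a directed cycle with pairwise
distinct vertices, or there is an unhappy swap available, i.e. an arc `(v, w)` of `F(σ)`
with `σ w = w`.  (An arc `(a, b)` of `F(σ)` means `G.Adj a b` and
`dist b (σ a) < dist a (σ a)`.) -/
theorem token_swapping_happy_cycle_or_unhappy_swap_exists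
    {V : Type*} [Fintype V] [DecidableEq V]
    (G : SimpleGraph V) (hG : G.Connected)
    (σ : Equiv.Perm V) (hσ : σ ≠ 1) :
    (∃ m : ℕ, 2 ≤ m ∧ ∃ v : ℕ → V,
      (∀ a < m, ∀ b < m, v a = v b → a = b) ∧
      ∀ i < m, G.Adj (v i) (v ((i + 1) % m)) ∧
        G.dist (v ((i + 1) % m)) (σ (v i)) < G.dist (v i) (σ (v i))) ∨
    (∃ v w : V, (G.Adj v w ∧ G.dist w (σ v) < G.dist v (σ v)) ∧ σ w = w) := by
  classical
  by_cases hU : ∃ v w : V, (G.Adj v w ∧ G.dist w (σ v) < G.dist v (σ v)) ∧ σ w = w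
  · exact Or.inr hU
  left
  have key : ∀ v : V, ∃ w : V, σ v ≠ v →
      (G.Adj v w ∧ G.dist w (σ v) < G.dist v (σ v)) := by
    intro v
    by_cases hv : σ v = v
    · exact ⟨v, fun h => absurd hv h⟩
    obtain ⟨p, hp⟩ := hG.exists_walk_length_eq_dist v (σ v)
    generalize σ v = t at *
    cases p with
    | nil => exact absurd rfl hv
    | cons h q =>
      refine ⟨_, fun _ => ⟨h, ?_⟩⟩
      have := SimpleGraph.dist_le q
      simp only [SimpleGraph.Walk.length_cons] at hp
      omega
  choose f hf using key
  have hne : ∃ x, σ x ≠ x := by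
    by_contra hcon
    push Not at hcon
    exact hσ (Equiv.ext hcon)
  obtain ⟨x, hx⟩ := hne
  have hstep : ∀ y, σ y ≠ y → σ (f y) ≠ f y := fun y hy h => hU ⟨y, f y, hf y hy, h⟩
  have hit : ∀ n y, σ y ≠ y → σ (f^[n] y) ≠ f^[n] y := by
    intro n
    induction n with
    | zero => intro y hy; exact hy
    | succ n ih => intro y hy; exact ih (f y) (hstep y hy)
  obtain ⟨i, j, hij, he⟩ : ∃ i j : ℕ, i < j ∧ f^[i] x = f^[j] x := by
    obtain ⟨i, j, hij, he⟩ := Finite.exists_ne_map_eq_of_infinite (fun n : ℕ => f^[n] x)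
    rcases lt_or_gt_of_ne hij with h | h
    · exact ⟨i, j, h, he⟩
    · exact ⟨j, i, h, he.symm⟩
  set y := f^[i] x with hy
  have hyne : σ y ≠ y := hit i x hx
  have hper : Function.IsPeriodicPt f (j - i) y := by
    change f^[j - i] y = y
    rw [hy, ← Function.iterate_add_apply, Nat.sub_add_cancel hij.le, ← he]
  have hpos : 0 < Function.minimalPeriod f y := hper.minimalPeriod_pos (by omega)
  have h1 : Function.minimalPeriod f y ≠ 1 := by
    intro h
    have hfix := Function.minimalPeriod_eq_one_iff_isFixedPt.1 h
    have hadj := (hf y hyne).1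
    rw [hfix.eq] at hadj
    exact G.irrefl hadj
  refine ⟨Function.minimalPeriod f y, by omega, fun n => f^[n] y, ?_, ?_⟩
  · intro a ha b hb hab
    exact Function.iterate_injOn_Iio_minimalPeriod ha hb hab
  · intro k _
    simp only [Function.iterate_mod_minimalPeriod_eq, Function.iterate_succ_apply']
    exact hf _ (hit k y hyne)
end

section
/- If G is a finite tree (a finite connected acyclic simple graph), then for every configuration σ, every directed cycle with pairwise distinct vertices in F(σ) has exactly two vertices; consequently, if both (v, w) and (w, v) are arcs of F(σ), then the swap along {v, w} satisfies L(σ ∘ (v w)) = L(σ) − 2. -/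
/-- If `G` is a finite tree (a finite connected acyclic simple graph), then
for every configuration `σ`, every directed cycle with pairwise distinct vertices in `F(σ)`
has exactly two vertices; consequently, if both `(v, w)` and `(w, v)` are arcs of `F(σ)`,
then the swap along `{v, w}` satisfies `L(σ ∘ (v w)) = L(σ) − 2`.
(An arc `(a, b)` of `F(σ)` means `G.Adj a b` and `dist b (σ a) < dist a (σ a)`;
`L(σ) = Σ_{x ∈ V} dist_G(x, σ x)`.) -/
theorem token_swapping_tree_cycles_have_length_two
    {V : Type*} [Fintype V] [DecidableEq V]
    (G : SimpleGraph V) (hT : G.IsTree) (σ : Equiv.Perm V) :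
    (∀ m : ℕ, 2 ≤ m → ∀ v : ℕ → V,
      (∀ a < m, ∀ b < m, v a = v b → a = b) →
      (∀ i < m, G.Adj (v i) (v ((i + 1) % m)) ∧
        G.dist (v ((i + 1) % m)) (σ (v i)) < G.dist (v i) (σ (v i))) →
      m = 2) ∧
    (∀ v w : V,
      (G.Adj v w ∧ G.dist w (σ v) < G.dist v (σ v)) →
      (G.Adj w v ∧ G.dist v (σ w) < G.dist w (σ w)) →
      (∑ x, G.dist x ((σ * Equiv.swap v w) x)) + 2 = ∑ x, G.dist x (σ x)) := by
  constructor
  · intro m hm v hinj harc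
    by_contra hne
    obtain ⟨n, rfl⟩ : ∃ n, m = n + 2 := ⟨m - 2, by omega⟩
    have hfree := SimpleGraph.isAcyclic_iff_free_cycleGraph.mp hT.isAcyclic (n + 2) (by omega)
    have key : ∀ a b : Fin (n + 2), b - a = 1 → G.Adj (v a) (v b) := by
      intro a b hab
      have hb : b = a + 1 := by rw [← hab]; abel
      have := (harc a a.isLt).1
      have hval : ((a : ℕ) + 1) % (n + 2) = (b : ℕ) := by
        rw [hb, Fin.val_add]; simp
      rwa [hval] at this
    apply hfree
    refine ⟨⟨⟨fun i => v i, ?_⟩, ?_⟩⟩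
    · intro a b hab
      rw [SimpleGraph.cycleGraph_adj] at hab
      rcases hab with h | h
      · exact (key b a h).symm
      · exact key a b h
    · intro a b hab
      exact Fin.ext (hinj a a.isLt b b.isLt hab)
  · rintro v w ⟨hvw, h1⟩ ⟨-, h2⟩
    have hne : v ≠ w := hvw.ne
    have e1 := hT.dist_eq_dist_add_one_of_adj (σ v) hvw
    have e2 := hT.dist_eq_dist_add_one_of_adj (σ w) hvw
    simp only [G.dist_comm (u := σ v), G.dist_comm (u := σ w)] at e1 e2
    have hw : w ∈ Finset.univ.erase v := by simp [hne.symm]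
    rw [← Finset.add_sum_erase _ _ (Finset.mem_univ v), ← Finset.add_sum_erase _ _ hw,
      ← Finset.add_sum_erase _ (fun x => G.dist x (σ x)) (Finset.mem_univ v),
      ← Finset.add_sum_erase _ (fun x => G.dist x (σ x)) hw]
    have hrest : ∑ x ∈ (Finset.univ.erase v).erase w, G.dist x ((σ * Equiv.swap v w) x)
        = ∑ x ∈ (Finset.univ.erase v).erase w, G.dist x (σ x) := by
      apply Finset.sum_congr rfl
      intro x hx
      simp only [Finset.mem_erase, Finset.mem_univ, and_true] at hx
      rw [Equiv.Perm.mul_apply, Equiv.swap_apply_of_ne_of_ne hx.2 hx.1]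
    rw [hrest]
    simp only [Equiv.Perm.mul_apply, Equiv.swap_apply_left, Equiv.swap_apply_right]
    omega
end

section
/- (Lemma 3.3) Consider a sequence of operations starting from a configuration σ on a finite connected simple graph G, in which every operation is a happy swap chain or an unhappy swap with respect to the current configuration. If some operation is an unhappy swap along an edge {v, w} (so that at that moment the token whose target vertex is w sits on w and is moved off w to v), then the first subsequent swap in the sequence that involves that token, if any, is a happy swap, i.e., a swap performed as part of a happy swap chain. -/
/-- An arc of the auxiliary digraph `F(σ)`: `(v, w)` is an arc when `{v, w}` is an edge of
`G` and the token on `v` gets strictly closer to its target by moving to `w`. -/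
def TokenSwap.FArc {V : Type*} (G : SimpleGraph V) (σ : Equiv.Perm V) (v w : V) : Prop :=
  G.Adj v w ∧ G.dist w (σ v) < G.dist v (σ v)

/-- The swap performed at time `j` (along the edge `e j`, in configuration `τ j`) is an
unhappy swap: `(e j).1 → (e j).2` is an arc of `F(τ j)` and the token on `(e j).2` is on
its target vertex. -/
def TokenSwap.UnhappyAt {V : Type*} (G : SimpleGraph V)
    (τ : ℕ → Equiv.Perm V) (e : ℕ → V × V) (j : ℕ) : Prop :=
  TokenSwap.FArc G (τ j) (e j).1 (e j).2 ∧ τ j (e j).2 = (e j).2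

/-- The `m − 1` swaps performed at times `j, j+1, …, j+m-2` form a happy swap chain for the
configuration `τ j`: there is a directed cycle `v 0, …, v (m-1)` (`m ≥ 2`, pairwise distinct
vertices) in `F(τ j)`, and the swaps are performed along its edges in the order
`(v (m-2), v (m-1)), …, (v 0, v 1)`, after which the token formerly on `v i` is on
`v (i+1 mod m)`. -/
def TokenSwap.HappyChainAt {V : Type*} (G : SimpleGraph V)
    (τ : ℕ → Equiv.Perm V) (e : ℕ → V × V) (j m : ℕ) : Prop :=
  2 ≤ m ∧ ∃ v : ℕ → V,
    (∀ a < m, ∀ b < m, v a = v b → a = b) ∧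
    (∀ i < m, TokenSwap.FArc G (τ j) (v i) (v ((i + 1) % m))) ∧
    (∀ i < m - 1, e (j + i) = (v (m - 2 - i), v (m - 1 - i)))

/-- **Lemma 3.3.** Consider a sequence of `N` swaps along edges
`e 0, …, e (N-1)`, with intermediate configurations `τ 0 = σ, τ 1, …, τ N` on a finite
connected simple graph `G`, which decomposes into consecutive blocks (with starting indices
`c 0 = 0 < c 1 < … < c B = N`), each block being either a single unhappy swap (marked
`happy = false`) or a happy swap chain (all of its swaps marked `happy = true`), with
respect to the configuration current at the start of the block.

If the swap at time `j` is an unhappy swap along the edge `{v, w} = e j` (so that at that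
moment the token whose target vertex is `w = (e j).2` sits on `w` and is moved off `w` to
`v`), then the first subsequent swap in the sequence that involves that token, if any, is a
happy swap, i.e. a swap performed as part of a happy swap chain. -/
theorem token_swapping_after_unhappy_swap_next_swap_is_happy
    {V : Type*} [Fintype V] [DecidableEq V]
    (G : SimpleGraph V) (hG : G.Connected)
    (σ : Equiv.Perm V) (N : ℕ) (e : ℕ → V × V) (τ : ℕ → Equiv.Perm V)
    (happy : ℕ → Bool)
    (hτ0 : τ 0 = σ)
    (hτ : ∀ j < N, τ (j + 1) = τ j * Equiv.swap (e j).1 (e j).2)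
    (B : ℕ) (c : ℕ → ℕ) (hc0 : c 0 = 0) (hcB : c B = N)
    (hblocks : ∀ i < B,
      (c (i + 1) = c i + 1 ∧ TokenSwap.UnhappyAt G τ e (c i) ∧ happy (c i) = false) ∨
      (∃ m, TokenSwap.HappyChainAt G τ e (c i) m ∧ c (i + 1) = c i + (m - 1) ∧
        ∀ j, c i ≤ j → j < c (i + 1) → happy j = true))
    -- the unhappy swap at time `j`:
    (j : ℕ) (hj : j < N) (hjstart : ∃ i < B, c i = j)
    (hjunhappy : happy j = false)
    -- `j'` is the first subsequent time whose swap involves the token `(e j).2`: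
    (j' : ℕ) (hj'1 : j < j') (hj'2 : j' < N)
    (hinv : τ j' ((e j').1) = (e j).2 ∨ τ j' ((e j').2) = (e j).2)
    (hfirst : ∀ j'', j < j'' → j'' < j' →
      ¬(τ j'' ((e j'').1) = (e j).2 ∨ τ j'' ((e j'').2) = (e j).2)) :
    happy j' = true := by
  classical
  by_contra hh
  have hblk : ∀ n, n ≤ B → ∀ k, k < c n → ∃ i < n, c i ≤ k ∧ k < c (i + 1) := by
    intro n
    induction n with
    | zero => intro _ k hk; omega
    | succ n ih =>
      intro hn k hk
      by_cases h : k < c n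
      · obtain ⟨i, hi, h1, h2⟩ := ih (by omega) k h
        exact ⟨i, by omega, h1, h2⟩
      · exact ⟨n, by omega, by omega, hk⟩
  have hun : ∀ k < N, happy k ≠ true → TokenSwap.UnhappyAt G τ e k := by
    intro k hk hne
    obtain ⟨i, hi, h1, h2⟩ := hblk B le_rfl k (by omega)
    rcases hblocks i hi with ⟨h3, h4, _⟩ | ⟨m, _, _, h5⟩
    · have : k = c i := by omega
      rw [this]; exact h4
    · exact absurd (h5 k h1 h2) hne
  obtain ⟨⟨hadj, _⟩, htok⟩ := hun j hj (by simp [hjunhappy])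
  obtain ⟨⟨_, hd'⟩, htok'⟩ := hun j' hj'2 hh
  have hstay : ∀ d, j + 1 + d ≤ j' → τ (j + 1 + d) (e j).1 = (e j).2 := by
    intro d
    induction d with
    | zero =>
      intro _
      simp [hτ j hj, htok]
    | succ d ih =>
      intro hd
      have h := ih (by omega)
      have hf := hfirst (j + 1 + d) (by omega) (by omega)
      push Not at hf
      have h1 : (e j).1 ≠ (e (j + 1 + d)).1 := by
        intro hE; rw [hE] at h; exact hf.1 h
      have h2 : (e j).1 ≠ (e (j + 1 + d)).2 := by
        intro hE; rw [hE] at h; exact hf.2 h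
      rw [← add_assoc, hτ (j + 1 + d) (by omega), Equiv.Perm.mul_apply,
        Equiv.swap_apply_of_ne_of_ne h1 h2, h]
  have hv : τ j' (e j).1 = (e j).2 := by
    have := hstay (j' - (j + 1)) (by omega)
    rwa [show j + 1 + (j' - (j + 1)) = j' by omega] at this
  rcases hinv with h | h
  · have ha : (e j').1 = (e j).1 := (τ j').injective (h.trans hv.symm)
    rw [h, ha, SimpleGraph.dist_eq_one_iff_adj.mpr hadj] at hd'
    have hb : (e j').2 = (e j).2 := hG.dist_eq_zero_iff.mp (by omega)
    rw [hb] at htok'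
    exact hadj.ne ((τ j').injective (hv.trans htok'.symm))
  · have ha : (e j').2 = (e j).1 := (τ j').injective (h.trans hv.symm)
    exact hadj.ne (by rw [← ha, ← htok', h])
end

section
/- (Theorem 3.4, general graphs) Let σ be a configuration on a finite connected simple graph G and suppose a sequence of operations, each a happy swap chain or an unhappy swap with respect to the current configuration, transforms σ into the identity. Then the total number of swaps performed is at most 2·L(σ); in particular, it is at most 4 times the minimum number of swaps along edges of G needed to sort σ. -/
/-- Weight of a token at distance `d` from its target. -/
def TokenSwap.wt (d : ℕ) : ℕ := if d = 1 then 1 else 2 * d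

theorem TokenSwap.wt_lt {a b : ℕ} (h : a < b) : TokenSwap.wt a + 1 ≤ TokenSwap.wt b := by
  unfold TokenSwap.wt; split_ifs <;> omega

theorem TokenSwap.wt_lt_two {a b : ℕ} (h : a < b) (ha : a ≠ 0) :
    TokenSwap.wt a + 2 ≤ TokenSwap.wt b := by
  unfold TokenSwap.wt; split_ifs <;> omega

theorem TokenSwap.wt_le (a : ℕ) : TokenSwap.wt a ≤ 2 * a := by
  unfold TokenSwap.wt; split_ifs <;> omega

/-- Total potential. -/
noncomputable def TokenSwap.pot {V : Type*} [Fintype V] (G : SimpleGraph V) (σ : Equiv.Perm V) : ℕ :=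
  ∑ x, TokenSwap.wt (G.dist x (σ x))

theorem TokenSwap.pot_unhappy {V : Type*} [Fintype V] [DecidableEq V] (G : SimpleGraph V)
    (hG : G.Connected) (σ : Equiv.Perm V) (v w : V) (h : TokenSwap.FArc G σ v w)
    (hw : σ w = w) : TokenSwap.pot G (σ * Equiv.swap v w) + 1 ≤ TokenSwap.pot G σ := by
  obtain ⟨hadj, hlt⟩ := h
  have hne : v ≠ w := hadj.ne
  have hwv : w ∈ Finset.univ.erase v := by simp [hne.symm]
  unfold TokenSwap.pot
  rw [← Finset.add_sum_erase _ _ (Finset.mem_univ v), ← Finset.add_sum_erase _ _ hwv,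
    ← Finset.add_sum_erase (a := v) Finset.univ (fun x => TokenSwap.wt (G.dist x (σ x)))
      (Finset.mem_univ v),
    ← Finset.add_sum_erase _ (fun x => TokenSwap.wt (G.dist x (σ x))) hwv]
  have hrest : ∑ x ∈ (Finset.univ.erase v).erase w,
      TokenSwap.wt (G.dist x ((σ * Equiv.swap v w) x)) =
      ∑ x ∈ (Finset.univ.erase v).erase w, TokenSwap.wt (G.dist x (σ x)) := by
    refine Finset.sum_congr rfl fun x hx => ?_
    simp only [Finset.mem_erase, Finset.mem_univ, and_true] at hx
    rw [Equiv.Perm.mul_apply, Equiv.swap_apply_of_ne_of_ne hx.2 hx.1]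
  rw [hrest]
  simp only [Equiv.Perm.mul_apply, Equiv.swap_apply_left, Equiv.swap_apply_right, hw]
  have h0 : G.dist w (σ v) ≠ 0 := by
    intro h
    have := hG.dist_eq_zero_iff.mp h
    rw [← hw] at this
    exact hne (σ.injective this.symm)
  have h1 := TokenSwap.wt_lt_two hlt h0
  have h2 : TokenSwap.wt (G.dist v w) = 1 := by
    rw [SimpleGraph.dist_eq_one_iff_adj.mpr hadj]; rfl
  omega

theorem TokenSwap.chain_step {V : Type*} [DecidableEq V]
    (τ : ℕ → Equiv.Perm V) (e : ℕ → V × V) (j n : ℕ) (v : ℕ → V)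
    (hinj : ∀ a < n + 1, ∀ b < n + 1, v a = v b → a = b)
    (he : ∀ i < n, e (j + i) = (v (n - 1 - i), v (n - i)))
    (hτ : ∀ i < n, τ (j + i + 1) = τ (j + i) * Equiv.swap (e (j + i)).1 (e (j + i)).2) :
    ∀ i ≤ n, (∀ a, n - i ≤ a → a < n → τ (j + i) (v (a + 1)) = τ j (v a)) ∧
      τ (j + i) (v (n - i)) = τ j (v n) ∧
      (∀ a < n - i, τ (j + i) (v a) = τ j (v a)) ∧
      (∀ x, (∀ a < n + 1, x ≠ v a) → τ (j + i) x = τ j x) := by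
  intro i
  induction i with
  | zero =>
    intro _
    refine ⟨fun a h1 h2 => by omega, by simp, fun a _ => by simp, fun x _ => by simp⟩
  | succ i ih =>
    intro hi
    obtain ⟨h1, h2, h3, h4⟩ := ih (by omega)
    have ht := hτ i (by omega)
    rw [he i (by omega)] at ht
    obtain ⟨p, hp⟩ : ∃ p, n - i = p + 1 := ⟨n - i - 1, by omega⟩
    have hp' : n - 1 - i = p := by omega
    have hp2 : n - (i + 1) = p := by omega
    rw [hp, hp'] at ht
    rw [hp] at h1 h2 h3
    rw [hp2, ← add_assoc, ht]
    simp only [Equiv.Perm.mul_apply]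
    refine ⟨fun a ha1 ha2 => ?_, ?_, fun a ha => ?_, fun x hx => ?_⟩
    · rcases Nat.eq_or_lt_of_le ha1 with rfl | hlt
      · rw [Equiv.swap_apply_right]; exact h3 _ (by omega)
      · rw [Equiv.swap_apply_of_ne_of_ne]
        · exact h1 a (by omega) ha2
        · intro h
          have := hinj _ (by omega) _ (by omega) h
          omega
        · intro h
          have := hinj _ (by omega) _ (by omega) h
          omega
    · rw [Equiv.swap_apply_left]; exact h2
    · rw [Equiv.swap_apply_of_ne_of_ne]
      · exact h3 a (by omega)
      · intro h
        have := hinj _ (by omega) _ (by omega) h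
        omega
      · intro h
        have := hinj _ (by omega) _ (by omega) h
        omega
    · rw [Equiv.swap_apply_of_ne_of_ne (hx _ (by omega)) (hx _ (by omega))]
      exact h4 x hx

theorem TokenSwap.pot_happy {V : Type*} [Fintype V] [DecidableEq V] (G : SimpleGraph V)
    (σ π : Equiv.Perm V) (n : ℕ) (v : ℕ → V)
    (hinj : ∀ a < n + 1, ∀ b < n + 1, v a = v b → a = b)
    (harc : ∀ i < n + 1, TokenSwap.FArc G σ (v i) (v ((i + 1) % (n + 1))))
    (h1 : ∀ a < n, π (v (a + 1)) = σ (v a)) (h2 : π (v 0) = σ (v n))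
    (h4 : ∀ x, (∀ a < n + 1, x ≠ v a) → π x = σ x) :
    TokenSwap.pot G π + (n + 1) ≤ TokenSwap.pot G σ := by
  have hset : Set.InjOn v (Finset.range (n + 1)) := by
    intro a ha b hb h
    simp only [Finset.coe_range, Set.mem_Iio] at ha hb
    exact hinj a ha b hb h
  unfold TokenSwap.pot
  rw [← Finset.sum_add_sum_compl ((Finset.range (n + 1)).image v)
      (fun x => TokenSwap.wt (G.dist x (π x))),
    ← Finset.sum_add_sum_compl ((Finset.range (n + 1)).image v)
      (fun x => TokenSwap.wt (G.dist x (σ x))),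
    Finset.sum_image hset, Finset.sum_image hset]
  have hc : ∑ x ∈ ((Finset.range (n + 1)).image v)ᶜ, TokenSwap.wt (G.dist x (π x)) =
      ∑ x ∈ ((Finset.range (n + 1)).image v)ᶜ, TokenSwap.wt (G.dist x (σ x)) := by
    refine Finset.sum_congr rfl fun x hx => ?_
    rw [h4 x]
    intro a ha hxa
    rw [Finset.mem_compl] at hx
    exact hx (Finset.mem_image.mpr ⟨a, Finset.mem_range.mpr ha, hxa.symm⟩)
  rw [hc, Finset.sum_range_succ', Finset.sum_range_succ]
  have hlast : TokenSwap.wt (G.dist (v 0) (π (v 0))) + 1 ≤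
      TokenSwap.wt (G.dist (v n) (σ (v n))) := by
    have := (harc n (by omega)).2
    rw [Nat.mod_self] at this
    rw [h2]
    exact TokenSwap.wt_lt this
  have hrest : ∑ a ∈ Finset.range n, (TokenSwap.wt (G.dist (v (a + 1)) (π (v (a + 1)))) + 1) ≤
      ∑ a ∈ Finset.range n, TokenSwap.wt (G.dist (v a) (σ (v a))) := by
    refine Finset.sum_le_sum fun a ha => ?_
    rw [Finset.mem_range] at ha
    have := (harc a (by omega)).2
    rw [Nat.mod_eq_of_lt (by omega)] at this
    rw [h1 a ha]
    exact TokenSwap.wt_lt this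
  rw [Finset.sum_add_distrib, Finset.sum_const, Finset.card_range, smul_eq_mul, mul_one] at hrest
  omega

theorem TokenSwap.len_swap {V : Type*} [Fintype V] [DecidableEq V] (G : SimpleGraph V)
    (v w : V) (hadj : G.Adj v w) : ∑ x, G.dist x (Equiv.swap v w x) ≤ 2 := by
  have hne : v ≠ w := hadj.ne
  have hwv : w ∈ Finset.univ.erase v := by simp [hne.symm]
  rw [← Finset.add_sum_erase _ _ (Finset.mem_univ v), ← Finset.add_sum_erase _ _ hwv]
  have hrest : ∑ x ∈ (Finset.univ.erase v).erase w, G.dist x (Equiv.swap v w x) = 0 := by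
    refine Finset.sum_eq_zero fun x hx => ?_
    simp only [Finset.mem_erase, Finset.mem_univ, and_true] at hx
    rw [Equiv.swap_apply_of_ne_of_ne hx.2 hx.1, SimpleGraph.dist_self]
  rw [hrest, Equiv.swap_apply_left, Equiv.swap_apply_right,
    SimpleGraph.dist_eq_one_iff_adj.mpr hadj, SimpleGraph.dist_eq_one_iff_adj.mpr hadj.symm]
  norm_num

theorem TokenSwap.len_le {V : Type*} [Fintype V] [DecidableEq V] (G : SimpleGraph V)
    (hG : G.Connected) (l : List (V × V)) (hl : ∀ p ∈ l, G.Adj p.1 p.2) :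
    ∑ x, G.dist x ((l.map fun p => Equiv.swap p.1 p.2).prod x) ≤ 2 * l.length := by
  induction l with
  | nil => simp
  | cons p l ih =>
    have ih := ih fun q hq => hl q (List.mem_cons_of_mem _ hq)
    have hp := TokenSwap.len_swap G p.1 p.2 (hl p List.mem_cons_self)
    rw [List.map_cons, List.prod_cons, List.length_cons]
    set ρ := (l.map fun p => Equiv.swap p.1 p.2).prod
    calc ∑ x, G.dist x ((Equiv.swap p.1 p.2 * ρ) x)
        ≤ ∑ x, (G.dist x (ρ x) + G.dist (ρ x) (Equiv.swap p.1 p.2 (ρ x))) :=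
          Finset.sum_le_sum fun x _ => hG.dist_triangle
      _ = ∑ x, G.dist x (ρ x) + ∑ x, G.dist x (Equiv.swap p.1 p.2 x) := by
          rw [Finset.sum_add_distrib,
            Equiv.sum_comp ρ (fun y => G.dist y (Equiv.swap p.1 p.2 y))]
      _ ≤ 2 * (l.length + 1) := by omega

/-- **Theorem 3.4, general graphs.** Let `σ` be a configuration on a finite
connected simple graph `G` and suppose a sequence of `N` swaps along edges
`e 0, …, e (N-1)`, with intermediate configurations `τ 0 = σ, τ 1, …, τ N`, decomposing
into consecutive blocks (with starting indices `c 0 = 0 < c 1 < … < c B = N`), each block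
a happy swap chain or an unhappy swap with respect to the configuration current at the
start of the block, transforms `σ` into the identity.  Then the total number `N` of swaps
performed is at most `2·L(σ)` where `L(σ) = Σ_{x ∈ V} dist_G(x, σ x)`; in particular, it is
at most `4` times the minimum number of swaps along edges of `G` needed to sort `σ`. -/
theorem token_swapping_happy_unhappy_algorithm_four_approximation
    {V : Type*} [Fintype V] [DecidableEq V]
    (G : SimpleGraph V) (hG : G.Connected)
    (σ : Equiv.Perm V) (N : ℕ) (e : ℕ → V × V) (τ : ℕ → Equiv.Perm V)
    (hτ0 : τ 0 = σ)
    (hτ : ∀ j < N, τ (j + 1) = τ j * Equiv.swap (e j).1 (e j).2)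
    (hτN : τ N = 1)
    (B : ℕ) (c : ℕ → ℕ) (hc0 : c 0 = 0) (hcB : c B = N)
    (hblocks : ∀ i < B,
      (c (i + 1) = c i + 1 ∧ TokenSwap.UnhappyAt G τ e (c i)) ∨
      (∃ m, TokenSwap.HappyChainAt G τ e (c i) m ∧ c (i + 1) = c i + (m - 1))) :
    N ≤ 2 * ∑ x, G.dist x (σ x) ∧
    ∀ (k : ℕ) (l : List (V × V)), l.length = k → (∀ p ∈ l, G.Adj p.1 p.2) →
      σ = (l.map fun p => Equiv.swap p.1 p.2).prod → N ≤ 4 * k := by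
  have hcN : ∀ d i, i + d = B → c i ≤ N := by
    intro d
    induction d with
    | zero => intro i hi; rw [← hcB, ← hi]; simp
    | succ d ih =>
      intro i hi
      have := ih (i + 1) (by omega)
      rcases hblocks i (by omega) with ⟨h, _⟩ | ⟨m, _, h⟩ <;> omega
  have key : ∀ i ≤ B, c i + TokenSwap.pot G (τ (c i)) ≤ TokenSwap.pot G σ := by
    intro i
    induction i with
    | zero => intro _; rw [hc0, hτ0]; simp
    | succ i ih =>
      intro hi
      have ih := ih (by omega)
      have hle : c (i + 1) ≤ N := hcN (B - (i + 1)) (i + 1) (by omega)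
      rcases hblocks i (by omega) with ⟨h, harc, hw⟩ | ⟨m, ⟨hm, v, hinj, harc, he⟩, h⟩
      · have := TokenSwap.pot_unhappy G hG _ _ _ harc hw
        rw [← hτ (c i) (by omega), ← h] at this
        omega
      · obtain ⟨n, rfl⟩ : ∃ n, m = n + 1 := ⟨m - 1, by omega⟩
        rw [Nat.add_sub_cancel] at h he
        have he' : ∀ i' < n, e (c i + i') = (v (n - 1 - i'), v (n - i')) := by
          intro i' hi'
          rw [he i' hi']
          rfl
        obtain ⟨h1, h2, -, h4⟩ := TokenSwap.chain_step τ e (c i) n v hinj he'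
          (fun i' hi' => hτ _ (by omega)) n le_rfl
        rw [Nat.sub_self] at h1 h2
        have := TokenSwap.pot_happy G (τ (c i)) (τ (c i + n)) n v hinj harc
          (fun a ha => h1 a (Nat.zero_le _) ha) h2 h4
        rw [← h] at this
        omega
  have hmain : N ≤ 2 * ∑ x, G.dist x (σ x) := by
    have h1 := key B le_rfl
    have h2 : TokenSwap.pot G σ ≤ 2 * ∑ x, G.dist x (σ x) := by
      rw [Finset.mul_sum]
      exact Finset.sum_le_sum fun x _ => TokenSwap.wt_le _
    omega
  refine ⟨hmain, ?_⟩
  intro k l hk hl hσ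
  have := TokenSwap.len_le G hG l hl
  rw [← hσ] at this
  omega
end

section
/- (Theorem 3.4, trees) Let σ be a configuration on a finite tree G (a finite connected acyclic simple graph) and suppose a sequence of operations, each a happy swap chain or an unhappy swap with respect to the current configuration, transforms σ into the identity. Then the total number of swaps performed is at most L(σ); in particular, it is at most 2 times the minimum number of swaps along edges of G needed to sort σ. -/
/-- A directed cycle of `F(σ)` in an acyclic graph has length two. -/
lemma TokenSwap.cycle_len {V : Type*} (G : SimpleGraph V) (hT : G.IsAcyclic) (m : ℕ)
    (v : ℕ → V) (hm : 2 ≤ m) (hinj : ∀ a < m, ∀ b < m, v a = v b → a = b)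
    (hadj : ∀ i < m, G.Adj (v i) (v ((i + 1) % m))) : m = 2 := by
  by_contra hne
  have h3 : 3 ≤ m := by omega
  have hlast := hadj (m - 1) (by omega)
  rw [show (m - 1 + 1) % m = 0 by rw [Nat.sub_add_cancel (by omega)]; simp] at hlast
  have hb := (SimpleGraph.isAcyclic_iff_forall_adj_isBridge.mp hT) hlast
  rw [SimpleGraph.isBridge_iff] at hb
  have key : ∀ i < m, (G \ SimpleGraph.fromEdgeSet {s(v (m - 1), v 0)}).Reachable (v 0) (v i) := by
    intro i
    induction i with
    | zero => intro _; exact SimpleGraph.Reachable.refl _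
    | succ i ih =>
      intro hi
      refine (ih (by omega)).trans (SimpleGraph.Adj.reachable ?_)
      have h1 := hadj i (by omega)
      rw [Nat.mod_eq_of_lt hi] at h1
      rw [SimpleGraph.sdiff_adj]
      refine ⟨h1, ?_⟩
      rw [SimpleGraph.fromEdgeSet_adj]
      rintro ⟨h2, -⟩
      rw [Set.mem_singleton_iff, Sym2.eq_iff] at h2
      rcases h2 with ⟨h2, h4⟩ | ⟨h2, h4⟩
      · have := hinj _ hi _ (by omega) h4
        omega
      · have := hinj _ (by omega) _ (by omega) h2
        have := hinj _ hi _ (by omega) h4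
        omega
  exact hb (key (m - 1) (by omega)).symm

/-- How `L` changes under a swap. -/
lemma TokenSwap.sum_swap {V : Type*} [Fintype V] [DecidableEq V] (G : SimpleGraph V)
    (σ : Equiv.Perm V) (v w : V) (h : v ≠ w) :
    (∑ x, G.dist x ((σ * Equiv.swap v w) x)) + (G.dist v (σ v) + G.dist w (σ w)) =
      (∑ x, G.dist x (σ x)) + (G.dist v (σ w) + G.dist w (σ v)) := by
  have hw : w ∈ Finset.univ.erase v := by simp [h.symm]
  rw [← Finset.add_sum_erase _ _ (Finset.mem_univ v), ← Finset.add_sum_erase _ _ hw,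
    ← Finset.add_sum_erase _ (fun x => G.dist x (σ x)) (Finset.mem_univ v),
    ← Finset.add_sum_erase _ (fun x => G.dist x (σ x)) hw]
  have : ∑ x ∈ (Finset.univ.erase v).erase w, G.dist x ((σ * Equiv.swap v w) x) =
      ∑ x ∈ (Finset.univ.erase v).erase w, G.dist x (σ x) := by
    refine Finset.sum_congr rfl fun x hx => ?_
    simp only [Finset.mem_erase] at hx
    rw [Equiv.Perm.mul_apply, Equiv.swap_apply_of_ne_of_ne hx.2.1 hx.1]
  rw [this]
  simp only [Equiv.Perm.mul_apply, Equiv.swap_apply_left, Equiv.swap_apply_right]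
  ring

/-- `D` is a set of vertices holding displaced tokens. -/
def TokenSwap.Good {V : Type*} (G : SimpleGraph V) (σ : Equiv.Perm V) (D : Finset V) : Prop :=
  (∀ v ∈ D, G.Adj v (σ v)) ∧ ∀ v ∈ D, σ (σ v) = v → σ v ∉ D

lemma TokenSwap.unhappy_step {V : Type*} [Fintype V] [DecidableEq V] (G : SimpleGraph V)
    (hc : G.Connected) (σ : Equiv.Perm V) (v w : V) (hF : TokenSwap.FArc G σ v w)
    (hw : σ w = w) (D : Finset V) (hD : TokenSwap.Good G σ D) :
    ∃ D', TokenSwap.Good G (σ * Equiv.swap v w) D' ∧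
      (∑ x, G.dist x ((σ * Equiv.swap v w) x)) + 1 + D.card ≤
        (∑ x, G.dist x (σ x)) + D'.card := by
  obtain ⟨ha, hd⟩ := hF
  have hne := ha.ne
  have hvw : G.dist v w = 1 := SimpleGraph.dist_eq_one_iff_adj.mpr ha
  have hwD : w ∉ D := fun h => by
    have := hD.1 w h
    rw [hw] at this
    exact this.ne rfl
  have hvD : v ∉ D := fun h => by
    have h1 := SimpleGraph.dist_eq_one_iff_adj.mpr (hD.1 v h)
    have h2 : G.dist w (σ v) = 0 := by omega
    have h3 : w = σ v := hc.dist_eq_zero_iff.mp h2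
    exact hne (σ.injective (by rw [hw, ← h3]))
  have hne' : ∀ x ∈ D, (σ * Equiv.swap v w) x = σ x := by
    intro x hx
    rw [Equiv.Perm.mul_apply, Equiv.swap_apply_of_ne_of_ne]
    · rintro rfl; exact hvD hx
    · rintro rfl; exact hwD hx
  have hv' : (σ * Equiv.swap v w) v = w := by simp [hw]
  refine ⟨insert v D, ⟨?_, ?_⟩, ?_⟩
  · intro x hx
    rcases Finset.mem_insert.mp hx with rfl | hx
    · rw [hv']; exact ha
    · rw [hne' x hx]; exact hD.1 x hx
  · intro x hx h1 h2
    rcases Finset.mem_insert.mp hx with rfl | hx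
    · rw [hv'] at h2
      rcases Finset.mem_insert.mp h2 with h2 | h2
      · exact hne h2.symm
      · exact hwD h2
    · rcases Finset.mem_insert.mp h2 with h2 | h2
      · rw [h2, hv'] at h1
        exact hwD (h1 ▸ hx)
      · rw [hne' _ h2, hne' x hx] at h1
        rw [hne' x hx] at h2
        exact hD.2 x hx h1 h2
  · have := TokenSwap.sum_swap G σ v w hne
    rw [hw, hvw, SimpleGraph.dist_self] at this
    rw [Finset.card_insert_of_notMem hvD]
    omega

lemma TokenSwap.happy_step {V : Type*} [Fintype V] [DecidableEq V] (G : SimpleGraph V)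
    (hc : G.Connected) (σ : Equiv.Perm V) (v w : V) (hF : TokenSwap.FArc G σ v w)
    (hF' : TokenSwap.FArc G σ w v) (D : Finset V) (hD : TokenSwap.Good G σ D) :
    ∃ D', TokenSwap.Good G (σ * Equiv.swap v w) D' ∧
      (∑ x, G.dist x ((σ * Equiv.swap v w) x)) + 1 + D.card ≤
        (∑ x, G.dist x (σ x)) + D'.card := by
  obtain ⟨ha, hd⟩ := hF
  obtain ⟨-, hd'⟩ := hF'
  have hne := ha.ne
  have hboth : v ∈ D → w ∉ D := fun hv hw => by
    have h1 := SimpleGraph.dist_eq_one_iff_adj.mpr (hD.1 v hv)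
    have h2 : w = σ v := hc.dist_eq_zero_iff.mp (by omega)
    have h3 := SimpleGraph.dist_eq_one_iff_adj.mpr (hD.1 w hw)
    have h4 : v = σ w := hc.dist_eq_zero_iff.mp (by omega)
    exact hD.2 v hv (by rw [← h2, ← h4]) (h2 ▸ hw)
  have hcard : D.card ≤ ((D.erase v).erase w).card + 1 := by
    by_cases hv : v ∈ D
    · rw [Finset.erase_eq_of_notMem (a := w) (fun h => hboth hv (Finset.mem_of_mem_erase h)),
        Finset.card_erase_add_one hv]
    · rw [Finset.erase_eq_of_notMem hv]
      have := Finset.pred_card_le_card_erase (s := D) (a := w)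
      omega
  have hne' : ∀ x ∈ (D.erase v).erase w, (σ * Equiv.swap v w) x = σ x := by
    intro x hx
    simp only [Finset.mem_erase] at hx
    rw [Equiv.Perm.mul_apply, Equiv.swap_apply_of_ne_of_ne hx.2.1 hx.1]
  have hsub : ∀ x ∈ (D.erase v).erase w, x ∈ D := fun x hx =>
    Finset.mem_of_mem_erase (Finset.mem_of_mem_erase hx)
  refine ⟨(D.erase v).erase w, ⟨?_, ?_⟩, ?_⟩
  · intro x hx
    rw [hne' x hx]; exact hD.1 x (hsub x hx)
  · intro x hx h1 h2
    rw [hne' _ h2, hne' x hx] at h1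
    rw [hne' x hx] at h2
    exact hD.2 x (hsub x hx) h1 (hsub _ h2)
  · have := TokenSwap.sum_swap G σ v w hne
    omega

lemma TokenSwap.lower_bound {V : Type*} [Fintype V] [DecidableEq V] (G : SimpleGraph V)
    (hc : G.Connected) (l : List (V × V)) (hl : ∀ p ∈ l, G.Adj p.1 p.2) :
    ∑ x, G.dist x ((l.map fun p => Equiv.swap p.1 p.2).prod x) ≤ 2 * l.length := by
  induction l with
  | nil => simp
  | cons p l ih =>
    have ih := ih fun q hq => hl q (List.mem_cons_of_mem _ hq)
    have hp := hl p List.mem_cons_self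
    have hs := TokenSwap.sum_swap G 1 p.1 p.2 hp.ne
    simp only [one_mul, Equiv.Perm.one_apply, SimpleGraph.dist_self, Finset.sum_const_zero] at hs
    rw [G.dist_comm (u := p.2), SimpleGraph.dist_eq_one_iff_adj.mpr hp] at hs
    set ρ := (l.map fun p => Equiv.swap p.1 p.2).prod
    have h1 : ∑ x, G.dist x ((Equiv.swap p.1 p.2 * ρ) x) ≤
        ∑ x, (G.dist x (ρ x) + G.dist (ρ x) (Equiv.swap p.1 p.2 (ρ x))) :=
      Finset.sum_le_sum fun x _ => hc.dist_triangle
    rw [Finset.sum_add_distrib,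
      Equiv.sum_comp ρ (fun y => G.dist y (Equiv.swap p.1 p.2 y))] at h1
    rw [List.map_cons, List.prod_cons, List.length_cons]
    change ∑ x, G.dist x ((Equiv.swap p.1 p.2 * ρ) x) ≤ _
    omega

/-- **Theorem 3.4, trees.** Let `σ` be a configuration on a finite tree `G`
(a finite connected acyclic simple graph) and suppose a sequence of `N` swaps along edges
`e 0, …, e (N-1)`, with intermediate configurations `τ 0 = σ, τ 1, …, τ N`, decomposing
into consecutive blocks (with starting indices `c 0 = 0 < c 1 < … < c B = N`), each block
a happy swap chain or an unhappy swap with respect to the configuration current at the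
start of the block, transforms `σ` into the identity.  Then the total number `N` of swaps
performed is at most `L(σ)` where `L(σ) = Σ_{x ∈ V} dist_G(x, σ x)`; in particular, it is
at most `2` times the minimum number of swaps along edges of `G` needed to sort `σ`. -/
theorem token_swapping_happy_unhappy_algorithm_two_approximation_on_trees
    {V : Type*} [Fintype V] [DecidableEq V]
    (G : SimpleGraph V) (hT : G.IsTree)
    (σ : Equiv.Perm V) (N : ℕ) (e : ℕ → V × V) (τ : ℕ → Equiv.Perm V)
    (hτ0 : τ 0 = σ)
    (hτ : ∀ j < N, τ (j + 1) = τ j * Equiv.swap (e j).1 (e j).2)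
    (hτN : τ N = 1)
    (B : ℕ) (c : ℕ → ℕ) (hc0 : c 0 = 0) (hcB : c B = N)
    (hblocks : ∀ i < B,
      (c (i + 1) = c i + 1 ∧ TokenSwap.UnhappyAt G τ e (c i)) ∨
      (∃ m, TokenSwap.HappyChainAt G τ e (c i) m ∧ c (i + 1) = c i + (m - 1))) :
    N ≤ ∑ x, G.dist x (σ x) ∧
    ∀ (k : ℕ) (l : List (V × V)), l.length = k → (∀ p ∈ l, G.Adj p.1 p.2) →
      σ = (l.map fun p => Equiv.swap p.1 p.2).prod → N ≤ 2 * k := by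
  have hc := hT.connected
  have hinv : ∀ i ≤ B, c i = i ∧ (i ≤ N → ∃ D, TokenSwap.Good G (τ i) D ∧
      i + ∑ x, G.dist x (τ i x) ≤ (∑ x, G.dist x (σ x)) + D.card) := by
    intro i
    induction i with
    | zero =>
      intro _
      refine ⟨hc0, fun _ => ⟨∅, ⟨by simp, by simp⟩, by simp [hτ0]⟩⟩
    | succ i ih =>
      intro hi
      obtain ⟨hci, hD⟩ := ih (by omega)
      rcases hblocks i (by omega) with ⟨h1, hF, hw⟩ | ⟨m, ⟨hm, v, hinj, harc, he⟩, h1⟩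
      · rw [hci] at hF hw h1
        refine ⟨h1, fun hiN => ?_⟩
        obtain ⟨D, hG, hle⟩ := hD (by omega)
        obtain ⟨D', hG', hle'⟩ := TokenSwap.unhappy_step G hc _ _ _ hF hw D hG
        refine ⟨D', ?_⟩
        rw [hτ i (by omega)]
        exact ⟨hG', by omega⟩
      · have hm2 := TokenSwap.cycle_len G hT.isAcyclic m v hm hinj fun i hi => (harc i hi).1
        subst hm2
        rw [hci] at harc he h1
        refine ⟨h1, fun hiN => ?_⟩
        obtain ⟨D, hG, hle⟩ := hD (by omega)
        have he0 : e i = (v 0, v 1) := by simpa using he 0 (by omega)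
        have ha0 := harc 0 (by omega)
        have ha1 := harc 1 (by omega)
        obtain ⟨D', hG', hle'⟩ := TokenSwap.happy_step G hc _ (v 0) (v 1) ha0 ha1 D hG
        refine ⟨D', ?_⟩
        rw [hτ i (by omega), he0]
        refine ⟨hG', ?_⟩
        dsimp only
        omega
  have hN : N ≤ ∑ x, G.dist x (σ x) := by
    obtain ⟨hB, hD⟩ := hinv B le_rfl
    have hBN : B = N := by omega
    obtain ⟨D, hG, hle⟩ := hD hBN.le
    rw [hBN, hτN] at hG hle
    have : D = ∅ := by
      refine Finset.eq_empty_of_forall_notMem fun x hx => ?_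
      exact (hG.1 x hx).ne rfl
    rw [this] at hle
    simp at hle
    omega
  refine ⟨hN, ?_⟩
  intro k l hk hl hσ
  have := TokenSwap.lower_bound G hc l hl
  rw [← hσ, hk] at this
  exact hN.trans this
end

section
/- (4-approximation, existence form) Every configuration σ on a finite connected simple graph G can be sorted by at most 2·L(σ) swaps along edges of G; consequently, the minimum number of swaps needed to sort σ lies between L(σ)/2 and 2·L(σ). -/
/-- `σ` is a product of at most `n` swaps along edges of `G`. -/
def TSCost {V : Type*} [DecidableEq V] (G : SimpleGraph V) (σ : Equiv.Perm V) (n : ℕ) : Prop :=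
  ∃ l : List (V × V), l.length ≤ n ∧ (∀ p ∈ l, G.Adj p.1 p.2) ∧
      σ = (l.map fun p => Equiv.swap p.1 p.2).prod

theorem TSCost.mul {V : Type*} [DecidableEq V] {G : SimpleGraph V} {σ τ : Equiv.Perm V} {m n : ℕ}
    (h : TSCost G σ m) (h' : TSCost G τ n) : TSCost G (σ * τ) (m + n) := by
  obtain ⟨l, h1, h2, h3⟩ := h
  obtain ⟨l', h1', h2', h3'⟩ := h'
  refine ⟨l ++ l', by simp; omega, ?_, by simp [h3, h3']⟩
  intro p hp
  rcases List.mem_append.1 hp with hp | hp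
  · exact h2 p hp
  · exact h2' p hp

theorem TSCost.mono {V : Type*} [DecidableEq V] {G : SimpleGraph V} {σ : Equiv.Perm V} {m n : ℕ}
    (h : TSCost G σ m) (hmn : m ≤ n) : TSCost G σ n := by
  obtain ⟨l, h1, h2⟩ := h
  exact ⟨l, h1.trans hmn, h2⟩

theorem TSCost.one {V : Type*} [DecidableEq V] (G : SimpleGraph V) (n : ℕ) :
    TSCost G (1 : Equiv.Perm V) n := ⟨[], by simp⟩

theorem TSCost.adj {V : Type*} [DecidableEq V] {G : SimpleGraph V} {u v : V} (h : G.Adj u v) :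
    TSCost G (Equiv.swap u v) 1 := ⟨[(u, v)], by simp [h]⟩

theorem TSCost.walk {V : Type*} [DecidableEq V] {G : SimpleGraph V} {u v : V} (p : G.Walk u v) :
    TSCost G (Equiv.swap u v) (2 * p.length) := by
  induction p with
  | nil => rw [Equiv.swap_self]; exact TSCost.one G _
  | @cons u v w h p ih =>
    by_cases huw : u = w
    · subst huw
      rw [Equiv.swap_self]; exact TSCost.one G _
    by_cases hvw : v = w
    · subst hvw
      exact (TSCost.adj h).mono (by simp; omega)
    have e : Equiv.swap u w = Equiv.swap u v * Equiv.swap v w * Equiv.swap u v := by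
      have h0 := h.ne
      ext x
      simp only [Equiv.Perm.mul_apply, Equiv.swap_apply_def]
      grind
    rw [e]
    exact (((TSCost.adj h).mul ih).mul (TSCost.adj h)).mono (by simp; omega)

theorem TSCost.dist {V : Type*} [DecidableEq V] {G : SimpleGraph V} (hG : G.Connected) (u v : V) :
    TSCost G (Equiv.swap u v) (2 * G.dist u v) := by
  obtain ⟨p, hp⟩ := hG.exists_walk_length_eq_dist u v
  rw [← hp]
  exact TSCost.walk p

theorem TSCost.main {V : Type*} [Fintype V] [DecidableEq V] {G : SimpleGraph V}
    (hG : G.Connected) (n : ℕ) : ∀ (σ : Equiv.Perm V), σ.support.card = n → ∀ p : V,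
      TSCost G σ (2 * ∑ x ∈ Finset.univ.erase p, G.dist x (σ x)) := by
  induction n using Nat.strong_induction_on with
  | _ n ih =>
    have key : ∀ (σ : Equiv.Perm V), σ.support.card = n → ∀ p : V, σ p ≠ p →
      TSCost G σ (2 * ∑ x ∈ Finset.univ.erase p, G.dist x (σ x)) := by
      intro σ hσ p hp
      have hx : σ (σ p) ≠ σ p := fun h => hp (σ.injective h)
      set x := σ p with hxdef
      set τ := Equiv.swap x (σ x) * σ with hτ
      have hτx : τ x = x := by simp [hτ]
      have hlt : τ.support.card < n := by
        rw [← hσ]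
        apply Finset.card_lt_card
        refine (Finset.ssubset_iff_of_subset ?_).2 ⟨x, by simpa using hx, by simpa using hτx⟩
        intro z hz
        rw [Equiv.Perm.mem_support] at hz ⊢
        intro h
        apply hz
        have h1 : z ≠ x := by rintro rfl; exact hx h
        have h2 : z ≠ σ x := by
          intro h2
          apply h1
          apply σ.injective
          rw [h, h2]
        rw [hτ, Equiv.Perm.mul_apply, h, Equiv.swap_apply_of_ne_of_ne h1 h2]
      have hc := (TSCost.dist hG x (σ x)).mul (ih _ hlt τ rfl p)
      have e : Equiv.swap x (σ x) * τ = σ := by simp [hτ]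
      rw [e] at hc
      refine hc.mono (le_of_eq ?_)
      have hmem : x ∈ Finset.univ.erase p := by simpa using hp
      rw [← Finset.add_sum_erase _ _ hmem, ← Finset.add_sum_erase _ (fun z => G.dist z (σ z)) hmem,
        hτx, SimpleGraph.dist_self, zero_add, mul_add]
      congr 2
      apply Finset.sum_congr rfl
      intro z hz
      simp only [Finset.mem_erase, Finset.mem_univ, and_true] at hz
      rw [hτ, Equiv.Perm.mul_apply, Equiv.swap_apply_of_ne_of_ne]
      · exact fun h => hz.2 (σ.injective h)
      · exact fun h => hz.1 (σ.injective h)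
    intro σ hσ p
    by_cases hp : σ p = p
    · by_cases h1 : σ = 1
      · subst h1; exact TSCost.one G _
      obtain ⟨q, hq⟩ : ∃ q, σ q ≠ q := by
        by_contra! h
        exact h1 (Equiv.ext h)
      refine (key σ hσ q hq).mono (Nat.mul_le_mul_left 2 ?_)
      have a := Finset.add_sum_erase Finset.univ (fun z => G.dist z (σ z)) (Finset.mem_univ p)
      have b := Finset.add_sum_erase Finset.univ (fun z => G.dist z (σ z)) (Finset.mem_univ q)
      simp only [hp, SimpleGraph.dist_self] at a
      omega
    · exact key σ hσ p hp

theorem ts_lower {V : Type*} [Fintype V] [DecidableEq V] {G : SimpleGraph V}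
    (hG : G.Connected) (l : List (V × V)) (hl : ∀ p ∈ l, G.Adj p.1 p.2) :
    ∑ x, G.dist x ((l.map fun p => Equiv.swap p.1 p.2).prod x) ≤ 2 * l.length := by
  induction l with
  | nil => simp
  | cons q l ih =>
    have ih := ih (fun p hp => hl p (List.mem_cons_of_mem _ hp))
    have hq := hl q List.mem_cons_self
    simp only [List.map_cons, List.prod_cons, Equiv.Perm.mul_apply, List.length_cons]
    set σ := (l.map fun p => Equiv.swap p.1 p.2).prod
    have h1 : ∑ x, G.dist x (Equiv.swap q.1 q.2 (σ x)) ≤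
        ∑ x, G.dist x (σ x) + ∑ x, G.dist (σ x) (Equiv.swap q.1 q.2 (σ x)) := by
      rw [← Finset.sum_add_distrib]
      exact Finset.sum_le_sum fun x _ => hG.dist_triangle
    have h2 := Equiv.sum_comp σ (fun y => G.dist y (Equiv.swap q.1 q.2 y))
    have h3 : ∑ y, G.dist y (Equiv.swap q.1 q.2 y) ≤
        ∑ y, ((if y = q.1 then 1 else 0) + (if y = q.2 then 1 else 0)) := by
      apply Finset.sum_le_sum
      intro y _
      have d1 := SimpleGraph.dist_eq_one_iff_adj.2 hq
      have d2 := SimpleGraph.dist_eq_one_iff_adj.2 hq.symm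
      rw [Equiv.swap_apply_def]
      have d3 : G.dist y y = 0 := SimpleGraph.dist_self
      grind
    rw [Finset.sum_add_distrib] at h3
    simp at h3
    omega

/-- **4-approximation, existence form.** Every configuration `σ` on a finite
connected simple graph `G` can be sorted by at most `2·L(σ)` swaps along edges of `G`;
consequently, the minimum number of swaps needed to sort `σ` lies between `L(σ)/2` and
`2·L(σ)`: there is a sorting sequence of length at most `2·L(σ)`, and every sorting sequence
of length `k` satisfies `L(σ) ≤ 2k`.  Here `L(σ) = Σ_{x ∈ V} dist_G(x, σ x)`. -/
theorem token_swapping_sortable_within_twice_L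
    {V : Type*} [Fintype V] [DecidableEq V]
    (G : SimpleGraph V) (hG : G.Connected) (σ : Equiv.Perm V) :
    (∃ l : List (V × V),
      l.length ≤ 2 * ∑ x, G.dist x (σ x) ∧
      (∀ p ∈ l, G.Adj p.1 p.2) ∧
      σ = (l.map fun p => Equiv.swap p.1 p.2).prod) ∧
    (∀ (k : ℕ) (l : List (V × V)), l.length = k → (∀ p ∈ l, G.Adj p.1 p.2) →
      σ = (l.map fun p => Equiv.swap p.1 p.2).prod →
      ∑ x, G.dist x (σ x) ≤ 2 * k) := by
  constructor
  · obtain ⟨p⟩ := hG.nonempty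
    refine (TSCost.main hG _ σ rfl p).mono (Nat.mul_le_mul_left 2 ?_)
    exact Finset.sum_le_sum_of_subset (Finset.erase_subset _ _)
  · intro k l hk hl hσ
    subst hk hσ
    exact ts_lower hG l hl
end

section
/- (2-approximation on trees, existence form) Every configuration σ on a finite tree G (a finite connected acyclic simple graph) can be sorted by at most L(σ) swaps along edges of G. -/
namespace TokenSwap

/-- Functions constant on the cycles of `σ`; its dimension is the number of cycles. -/
def fixSub {V : Type*} (σ : Equiv.Perm V) : Submodule ℚ (V → ℚ) where
  carrier := {f | ∀ x, f (σ x) = f x}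
  add_mem' := by
    intro a b ha hb x
    simp only [Set.mem_ofPred_eq] at ha hb
    simp [ha x, hb x]
  zero_mem' := by intro x; rfl
  smul_mem' := by
    intro c a ha x
    simp only [Set.mem_ofPred_eq] at ha
    simp [ha x]

lemma mem_fixSub {V : Type*} (σ : Equiv.Perm V) (f : V → ℚ) :
    f ∈ fixSub σ ↔ ∀ x, f (σ x) = f x := Iff.rfl

/-- The functional `f ↦ f u - f v` restricted to the fixed functions. -/
def diffMap {V : Type*} (σ : Equiv.Perm V) (u v : V) : fixSub σ →ₗ[ℚ] ℚ :=
  ((LinearMap.proj u : (V → ℚ) →ₗ[ℚ] ℚ) - (LinearMap.proj v : (V → ℚ) →ₗ[ℚ] ℚ)).comp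
    (fixSub σ).subtype

lemma finrank_le_succ {V : Type*} [Fintype V] [DecidableEq V] (σ : Equiv.Perm V) (u v : V) :
    Module.finrank ℚ (fixSub σ) ≤ Module.finrank ℚ (fixSub (σ * Equiv.swap u v)) + 1 := by
  have h1 := (diffMap σ u v).finrank_range_add_finrank_ker
  have h2 : Module.finrank ℚ (LinearMap.range (diffMap σ u v)) ≤ 1 := by
    simpa using Submodule.finrank_le (LinearMap.range (diffMap σ u v))
  have h3 : Module.finrank ℚ (LinearMap.ker (diffMap σ u v)) ≤
      Module.finrank ℚ (fixSub (σ * Equiv.swap u v)) := by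
    rw [← Submodule.finrank_map_subtype_eq (fixSub σ) (LinearMap.ker (diffMap σ u v))]
    apply Submodule.finrank_mono
    rintro f ⟨⟨f', hf'⟩, hk, rfl⟩
    have hk' : f' u = f' v := by
      have : f' u - f' v = 0 := LinearMap.mem_ker.mp hk
      linarith
    intro x
    have e : f' (Equiv.swap u v x) = f' x := by
      by_cases h1 : x = u
      · subst h1; simp [hk']
      by_cases h2 : x = v
      · subst h2; simp [hk']
      rw [Equiv.swap_apply_of_ne_of_ne h1 h2]
    exact (hf' _).trans e
  omega

lemma finrank_lt {V : Type*} [Fintype V] [DecidableEq V] (σ : Equiv.Perm V) (u v : V)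
    (huv : u ≠ v) (hv : σ v = v) :
    Module.finrank ℚ (fixSub (σ * Equiv.swap u v)) < Module.finrank ℚ (fixSub σ) := by
  apply Submodule.finrank_lt_finrank_of_lt
  have key : ∀ f ∈ fixSub (σ * Equiv.swap u v), f u = f v ∧ f ∈ fixSub σ := by
    intro f hf
    rw [mem_fixSub] at hf
    have hu := hf u
    have hv' := hf v
    simp [hv] at hu hv'
    refine ⟨hu.symm, fun x => ?_⟩
    by_cases h1 : x = u
    · subst h1; rw [hv', hu]
    by_cases h2 : x = v
    · subst h2; rw [hv]
    have := hf x
    simpa [Equiv.swap_apply_of_ne_of_ne h1 h2] using this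
  rw [SetLike.lt_iff_le_and_exists]
  refine ⟨fun f hf => (key f hf).2, Pi.single v 1, ?_, ?_⟩
  · intro x
    by_cases h : x = v
    · subst h; rw [hv]
    · have : σ x ≠ v := fun h' => h (σ.injective (h'.trans hv.symm))
      simp [h, this]
  · intro h
    have := (key _ h).1
    simp [huv] at this

lemma exists_next {V : Type*} (G : SimpleGraph V) (hc : G.Connected) {v t : V} (h : v ≠ t) :
    ∃ w, G.Adj v w ∧ G.dist w t + 1 = G.dist v t := by
  obtain ⟨p, hp⟩ := hc.exists_walk_length_eq_dist v t
  cases p with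
  | nil => exact absurd rfl h
  | cons hadj q =>
    rename_i w
    refine ⟨w, hadj, ?_⟩
    have h1 := SimpleGraph.dist_le q
    have h2 := hc.dist_triangle (u := v) (v := w) (w := t)
    rw [SimpleGraph.dist_eq_one_iff_adj.mpr hadj] at h2
    simp at hp
    omega

lemma sum_swap_s11 {V : Type*} [Fintype V] [DecidableEq V] (G : SimpleGraph V) (σ : Equiv.Perm V)
    (u v : V) (huv : u ≠ v) :
    (∑ x, G.dist x ((σ * Equiv.swap u v) x)) + G.dist u (σ u) + G.dist v (σ v) =
    (∑ x, G.dist x (σ x)) + G.dist v (σ u) + G.dist u (σ v) := by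
  have hv : v ∈ Finset.univ.erase u := by simp [huv.symm]
  rw [← Finset.add_sum_erase _ _ (Finset.mem_univ u), ← Finset.add_sum_erase _ _ hv,
    ← Finset.add_sum_erase _ (fun x => G.dist x (σ x)) (Finset.mem_univ u),
    ← Finset.add_sum_erase _ (fun x => G.dist x (σ x)) hv]
  have : ∑ x ∈ (Finset.univ.erase u).erase v, G.dist x ((σ * Equiv.swap u v) x) =
      ∑ x ∈ (Finset.univ.erase u).erase v, G.dist x (σ x) := by
    apply Finset.sum_congr rfl
    intro x hx
    simp at hx
    simp [Equiv.swap_apply_of_ne_of_ne hx.2 hx.1]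
  rw [this]
  simp
  omega

lemma exists_good {V : Type*} [Fintype V] [DecidableEq V] (G : SimpleGraph V) (hT : G.IsTree)
    (σ : Equiv.Perm V) (hσ : σ ≠ 1) :
    ∃ u v, G.Adj u v ∧ G.dist v (σ u) + 1 = G.dist u (σ u) ∧
      (σ v = v ∨ G.dist u (σ v) + 1 = G.dist v (σ v)) := by
  classical
  by_contra! hno
  obtain ⟨x, hx⟩ : ∃ x, σ x ≠ x := by
    by_contra! h
    exact hσ (Equiv.ext h)
  have hg : ∀ v, ∃ w, G.Adj v w ∧ (σ v ≠ v → G.dist w (σ v) + 1 = G.dist v (σ v)) ∧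
      (σ v = v → G.dist w x + 1 = G.dist v x) := by
    intro v
    by_cases h : σ v = v
    · obtain ⟨w, h1, h2⟩ := exists_next G hT.connected (v := v) (t := x)
        (by rintro rfl; exact hx h)
      exact ⟨w, h1, fun h' => absurd h h', fun _ => h2⟩
    · obtain ⟨w, h1, h2⟩ := exists_next G hT.connected (v := v) (t := σ v) (Ne.symm h)
      exact ⟨w, h1, fun _ => h2, fun h' => absurd h' h⟩
  choose g hg1 hg2 hg3 using hg
  have hgg : ∀ v, g (g v) ≠ v := by
    intro v hv
    by_cases h : σ v = v
    · by_cases h' : σ (g v) = g v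
      · have a := hg3 v h
        have b := hg3 _ h'
        rw [hv] at b
        omega
      · have a := hg2 _ h'
        rw [hv] at a
        exact (hno (g v) v (hg1 v).symm a).1 h
    · have a := hg2 v h
      obtain ⟨h1, h2⟩ := hno v (g v) (hg1 v) a
      have b := hg2 _ h1
      rw [hv] at b
      exact h2 b
  have h1 : (Finset.univ : Finset V).card ≤ G.edgeFinset.card := by
    apply Finset.card_le_card_of_injOn (fun v => s(v, g v))
    · intro v _
      simpa using hg1 v
    · intro v _ w _ h
      rcases Sym2.eq_iff.mp h with h | h
      · exact h.1
      · exact absurd (by rw [h.2, ← h.1]) (hgg v)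
  have h2 := hT.card_edgeFinset
  rw [Finset.card_univ] at h1
  omega

lemma main {V : Type*} [Fintype V] [DecidableEq V] (G : SimpleGraph V) (hT : G.IsTree) (N : ℕ) :
    ∀ σ : Equiv.Perm V, (∑ x, G.dist x (σ x)) + Module.finrank ℚ (fixSub σ) ≤ N →
    ∃ l : List (V × V),
      l.length + Fintype.card V ≤ (∑ x, G.dist x (σ x)) + Module.finrank ℚ (fixSub σ) ∧
      (∀ p ∈ l, G.Adj p.1 p.2) ∧
      σ = (l.map fun p => Equiv.swap p.1 p.2).prod := by
  induction N with
  | zero =>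
    intro σ h
    by_cases hσ : σ = 1
    · subst hσ
      refine ⟨[], ?_, by simp, by simp⟩
      have : fixSub (1 : Equiv.Perm V) = ⊤ := by
        ext f; simp [mem_fixSub]
      rw [this]; simp
    · obtain ⟨u, v, h1, h2, -⟩ := exists_good G hT σ hσ
      have := Finset.single_le_sum (f := fun x => G.dist x (σ x)) (fun _ _ => Nat.zero_le _)
        (Finset.mem_univ u)
      omega
  | succ N ih =>
    intro σ h
    by_cases hσ : σ = 1
    · subst hσ
      refine ⟨[], ?_, by simp, by simp⟩
      have : fixSub (1 : Equiv.Perm V) = ⊤ := by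
        ext f; simp [mem_fixSub]
      rw [this]; simp
    · obtain ⟨u, v, h1, h2, h3⟩ := exists_good G hT σ hσ
      have hs := sum_swap_s11 G σ u v h1.ne
      have hdec : (∑ x, G.dist x ((σ * Equiv.swap u v) x)) +
          Module.finrank ℚ (fixSub (σ * Equiv.swap u v)) + 1 ≤
          (∑ x, G.dist x (σ x)) + Module.finrank ℚ (fixSub σ) := by
        rcases h3 with h3 | h3
        · have := finrank_lt σ u v h1.ne h3
          rw [h3, SimpleGraph.dist_self, SimpleGraph.dist_eq_one_iff_adj.mpr h1] at hs
          omega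
        · have := finrank_le_succ (σ * Equiv.swap u v) u v
          rw [mul_assoc, Equiv.swap_mul_self, mul_one] at this
          omega
      obtain ⟨l, hl1, hl2, hl3⟩ := ih (σ * Equiv.swap u v) (by omega)
      refine ⟨l ++ [(u, v)], ?_, ?_, ?_⟩
      · simp only [List.length_append, List.length_singleton]
        omega
      · intro p hp
        rcases List.mem_append.mp hp with hp | hp
        · exact hl2 p hp
        · rw [List.mem_singleton] at hp
          subst hp
          exact h1
      · rw [List.map_append, List.prod_append, ← hl3]
        simp [mul_assoc]

end TokenSwap


/-- **2-approximation on trees, existence form.** Every configuration `σ` on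
a finite tree `G` (a finite connected acyclic simple graph) can be sorted by at most `L(σ)`
swaps along edges of `G`, where `L(σ) = Σ_{x ∈ V} dist_G(x, σ x)`. -/
theorem token_swapping_tree_sortable_within_L
    {V : Type*} [Fintype V] [DecidableEq V]
    (G : SimpleGraph V) (hT : G.IsTree) (σ : Equiv.Perm V) :
    ∃ l : List (V × V),
      l.length ≤ ∑ x, G.dist x (σ x) ∧
      (∀ p ∈ l, G.Adj p.1 p.2) ∧
      σ = (l.map fun p => Equiv.swap p.1 p.2).prod := by
  obtain ⟨l, h1, h2, h3⟩ := TokenSwap.main G hT _ σ le_rfl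
  refine ⟨l, ?_, h2, h3⟩
  have h : Module.finrank ℚ (TokenSwap.fixSub σ) ≤ Fintype.card V := by
    simpa using Submodule.finrank_le (TokenSwap.fixSub σ)
  omega
end
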